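/- Fix n ∈ ℕ with n ≥ 2 and c ∈ ℝ. For every ρ ∈ (0,1), the function ρ ↦ H_n(ρ,c) is twice differentiable at ρ, and its second derivative equals ∫_ℝ n·Φ(d)^{n−2}·φ(d)·[ ((n−1)φ(d) − d·Φ(d))·G(ρ,c,z)² + Φ(d)·G(ρ,c,z)·(4ρ−1)/(2ρ(1−ρ)) + c·Φ(d)/(4ρ(1−ρ)^{3/2}) ]·φ(z) dz, where d = d(ρ,c,z) and G(ρ,c,z) = (c + z/√ρ)/(2(1−ρ)^{3/2}). -/

import Mathlib

open MeasureTheory Filter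

/-- The standard normal density. -/
noncomputable def phi (x : ℝ) : ℝ := (Real.sqrt (2 * Real.pi))⁻¹ * Real.exp (-x ^ 2 / 2)

/-- The standard normal cumulative distribution function. -/
noncomputable def Phi (x : ℝ) : ℝ := ∫ t in Set.Iic x, phi t

/-- d(ρ,c,z) = (c + √ρ·z)/√(1−ρ). -/
noncomputable def dd (ρ c z : ℝ) : ℝ := (c + Real.sqrt ρ * z) / Real.sqrt (1 - ρ)

/-- G(ρ,c,z) = (c + z/√ρ)/(2(1−ρ)^{3/2}). -/
noncomputable def G (ρ c z : ℝ) : ℝ :=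
  (c + z / Real.sqrt ρ) / (2 * (1 - ρ) ^ ((3 : ℝ) / 2))

/-- H_n(ρ,c) = ∫ Φ(d(ρ,c,z))^n φ(z) dz. -/
noncomputable def Hn (n : ℕ) (ρ c : ℝ) : ℝ := ∫ z : ℝ, (Phi (dd ρ c z)) ^ n * phi z

lemma phi_pos (x : ℝ) : 0 < phi x := by unfold phi; positivity

lemma continuous_phi : Continuous phi := by unfold phi; fun_prop

lemma sqrt_two_pi_inv_le : (Real.sqrt (2 * Real.pi))⁻¹ ≤ 1 := by
  apply inv_le_one_of_one_le₀
  rw [Real.one_le_sqrt]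
  linarith [Real.pi_gt_three]

lemma phi_le_one (x : ℝ) : phi x ≤ 1 := by
  unfold phi
  have h : Real.exp (-x ^ 2 / 2) ≤ 1 := Real.exp_le_one_iff.2 (by nlinarith [sq_nonneg x])
  exact mul_le_one₀ sqrt_two_pi_inv_le (Real.exp_pos _).le h

lemma abs_mul_phi_le_one (x : ℝ) : |x| * phi x ≤ 1 := by
  unfold phi
  have h : |x| * Real.exp (-x ^ 2 / 2) ≤ 1 := by
    have h1 : |x| ≤ Real.exp (x ^ 2 / 2) := by
      have := Real.add_one_le_exp (x ^ 2 / 2)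
      nlinarith [sq_nonneg (|x| - 1), sq_abs x]
    calc |x| * Real.exp (-x ^ 2 / 2) ≤ Real.exp (x ^ 2 / 2) * Real.exp (-x ^ 2 / 2) := by gcongr
      _ = 1 := by rw [← Real.exp_add]; ring_nf; simp
  have h0 : 0 ≤ |x| * Real.exp (-x ^ 2 / 2) := by positivity
  calc |x| * ((Real.sqrt (2 * Real.pi))⁻¹ * Real.exp (-x ^ 2 / 2))
      = (Real.sqrt (2 * Real.pi))⁻¹ * (|x| * Real.exp (-x ^ 2 / 2)) := by ring
    _ ≤ 1 := mul_le_one₀ sqrt_two_pi_inv_le h0 h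

lemma phi_eq : phi = ProbabilityTheory.gaussianPDFReal 0 1 := by
  ext x; simp [phi, ProbabilityTheory.gaussianPDFReal]

lemma integrable_phi : Integrable phi := by
  rw [phi_eq]; exact ProbabilityTheory.integrable_gaussianPDFReal 0 1

lemma integral_phi : ∫ x, phi x = 1 := by
  rw [phi_eq]; exact ProbabilityTheory.integral_gaussianPDFReal_eq_one 0 (by simp)

lemma integrable_bound (C : ℝ) : Integrable (fun z => C * (1 + z ^ 2) * phi z) := by
  have h := (integrable_rpow_mul_exp_neg_mul_sq (b := 1 / 2) (by norm_num) (s := 2) (by norm_num))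
  have h2 : Integrable (fun z : ℝ => z ^ 2 * phi z) := by
    refine (h.const_mul (Real.sqrt (2 * Real.pi))⁻¹).congr (Eventually.of_forall fun z => ?_)
    simp only [phi, Real.rpow_two]
    rw [show -(1 / 2) * z ^ 2 = -z ^ 2 / 2 by ring]; ring
  refine ((integrable_phi.add h2).const_mul C).congr (Eventually.of_forall fun z => ?_)
  simp only [Pi.add_apply]; ring

lemma Phi_nonneg (x : ℝ) : 0 ≤ Phi x :=
  integral_nonneg fun t => (phi_pos t).le

lemma Phi_le_one (x : ℝ) : Phi x ≤ 1 := by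
  rw [← integral_phi]
  exact setIntegral_le_integral integrable_phi (Eventually.of_forall fun t => (phi_pos t).le)

lemma hasDerivAt_Phi (x : ℝ) : HasDerivAt Phi (phi x) x := by
  have h : Phi = fun x => Phi 0 + ∫ t in (0:ℝ)..x, phi t := by
    ext y
    rw [← intervalIntegral.integral_Iic_sub_Iic integrable_phi.integrableOn
      integrable_phi.integrableOn]
    simp [Phi]
  rw [h]
  exact (intervalIntegral.integral_hasDerivAt_right (integrable_phi.intervalIntegrable)
    (continuous_phi.stronglyMeasurableAtFilter _ _) continuous_phi.continuousAt).const_add _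

lemma continuous_Phi : Continuous Phi :=
  continuous_iff_continuousAt.2 fun x => (hasDerivAt_Phi x).continuousAt

lemma hasDerivAt_phi (x : ℝ) : HasDerivAt phi (-x * phi x) x := by
  unfold phi
  have h : HasDerivAt (fun x : ℝ => -x ^ 2 / 2) (-x) x := by
    have := ((hasDerivAt_pow 2 x).neg.div_const 2)
    exact this.congr_deriv (by simp; ring)
  exact (h.exp.const_mul (Real.sqrt (2 * Real.pi))⁻¹).congr_deriv (by ring)

lemma rpow_three_half {x : ℝ} (hx : 0 < x) : x ^ ((3 : ℝ) / 2) = x * Real.sqrt x := by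
  rw [show (3:ℝ)/2 = 1 + 1/2 by norm_num, Real.rpow_add hx, Real.rpow_one, Real.sqrt_eq_rpow]

lemma hasDerivAt_dd (c z : ℝ) {r : ℝ} (h0 : 0 < r) (h1 : r < 1) :
    HasDerivAt (fun r => dd r c z) (G r c z) r := by
  have h1' : 0 < 1 - r := by linarith
  have hs := Real.hasDerivAt_sqrt h0.ne'
  have ht := (((hasDerivAt_id r).const_sub 1).sqrt h1'.ne')
  have p0 := Real.sqrt_pos.2 h0
  have p1 := Real.sqrt_pos.2 h1'
  refine (((hs.mul_const z).const_add c).div ht p1.ne').congr_deriv ?_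
  symm
  unfold G
  rw [rpow_three_half h1']
  simp only [id]
  have e0 := Real.sq_sqrt h0.le
  have e1 := Real.sq_sqrt h1'.le
  set s := Real.sqrt r
  set t := Real.sqrt (1 - r)
  rw [← e1]
  have : t ^ 2 + s ^ 2 = 1 := by rw [e0, e1]; ring
  field_simp
  linear_combination (-z) * this

lemma hasDerivAt_G (c z : ℝ) {r : ℝ} (h0 : 0 < r) (h1 : r < 1) :
    HasDerivAt (fun r => G r c z) (G r c z * (4 * r - 1) / (2 * r * (1 - r))
      + c / (4 * r * (1 - r) ^ ((3 : ℝ) / 2))) r := by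
  have h1' : 0 < 1 - r := by linarith
  have hs := Real.hasDerivAt_sqrt h0.ne'
  have ht := ((hasDerivAt_id r).const_sub 1).rpow_const (p := (3:ℝ)/2) (Or.inl h1'.ne')
  have p0 := Real.sqrt_pos.2 h0
  have p1 := Real.sqrt_pos.2 h1'
  have pd : 0 < 2 * (1 - r) ^ ((3:ℝ)/2) := by positivity
  refine ((((hs.fun_inv p0.ne').const_mul z).const_add c).div (ht.const_mul 2) pd.ne').congr_deriv ?_
  symm
  unfold G
  simp only [id]
  rw [rpow_three_half h1', show (3:ℝ)/2 - 1 = 1/2 by norm_num, ← Real.sqrt_eq_rpow]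
  have e0 := Real.sq_sqrt h0.le
  have e1 := Real.sq_sqrt h1'.le
  set s := Real.sqrt r
  set t := Real.sqrt (1 - r)
  have e : t ^ 2 + s ^ 2 = 1 := by rw [e0, e1]; ring
  rw [← e1, ← e0]
  field_simp
  have : t ^ 2 = 1 - s ^ 2 := by linarith
  rw [this]
  ring

noncomputable def F1 (n : ℕ) (c r z : ℝ) : ℝ :=
  (n : ℝ) * Phi (dd r c z) ^ (n - 1) * phi (dd r c z) * G r c z * phi z

noncomputable def F2 (n : ℕ) (c r z : ℝ) : ℝ :=
  (n : ℝ) * (Phi (dd r c z)) ^ (n - 2) * phi (dd r c z) *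
        ((((n : ℝ) - 1) * phi (dd r c z) - dd r c z * Phi (dd r c z)) * (G r c z) ^ 2
          + Phi (dd r c z) * G r c z * (4 * r - 1) / (2 * r * (1 - r))
          + c * Phi (dd r c z) / (4 * r * (1 - r) ^ ((3 : ℝ) / 2))) * phi z

lemma hasDerivAt_F0 (n : ℕ) (c z : ℝ) {r : ℝ} (h0 : 0 < r) (h1 : r < 1) :
    HasDerivAt (fun r => Phi (dd r c z) ^ n * phi z) (F1 n c r z) r := by
  have hP := (hasDerivAt_Phi (dd r c z)).comp r (hasDerivAt_dd c z h0 h1)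
  refine ((hP.fun_pow n).mul_const (phi z)).congr_deriv ?_
  simp only [F1, Function.comp]; ring

lemma hasDerivAt_F1 (n : ℕ) (hn : 2 ≤ n) (c z : ℝ) {r : ℝ} (h0 : 0 < r) (h1 : r < 1) :
    HasDerivAt (fun r => F1 n c r z) (F2 n c r z) r := by
  have hP := (hasDerivAt_Phi (dd r c z)).comp r (hasDerivAt_dd c z h0 h1)
  have hp := (hasDerivAt_phi (dd r c z)).comp r (hasDerivAt_dd c z h0 h1)
  have := (((((hP.fun_pow (n - 1)).const_mul (n : ℝ)).fun_mul hp).fun_mul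
    (hasDerivAt_G c z h0 h1)).mul_const (phi z))
  refine this.congr_deriv ?_
  obtain ⟨m, rfl⟩ := Nat.exists_eq_add_of_le hn
  simp only [F2, Function.comp]
  rw [show 2 + m - 2 = m by omega, show 2 + m - 1 = m + 1 by omega]
  simp only [Nat.add_sub_cancel]
  push_cast
  ring

lemma cont_dd (r c : ℝ) : Continuous (fun z => dd r c z) := by unfold dd; fun_prop
lemma cont_G (r c : ℝ) : Continuous (fun z => G r c z) := by unfold G; fun_prop
lemma cont_F0 (n : ℕ) (c r : ℝ) : Continuous (fun z => Phi (dd r c z) ^ n * phi z) :=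
  ((continuous_Phi.comp (cont_dd r c)).pow n).mul continuous_phi
lemma cont_F1 (n : ℕ) (c r : ℝ) : Continuous (F1 n c r) := by
  have h1 := continuous_Phi.comp (cont_dd r c)
  have h2 := continuous_phi.comp (cont_dd r c)
  have h3 := cont_G r c
  have h4 := continuous_phi
  simp only [Function.comp_def] at h1 h2
  unfold F1
  fun_prop
lemma cont_F2 (n : ℕ) (c r : ℝ) : Continuous (F2 n c r) := by
  have h1 := continuous_Phi.comp (cont_dd r c)
  have h2 := continuous_phi.comp (cont_dd r c)
  have h3 := cont_G r c
  have h4 := continuous_phi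
  have h5 := cont_dd r c
  simp only [Function.comp_def] at h1 h2
  unfold F2
  fun_prop

lemma G_bound (c : ℝ) {a e : ℝ} (ha : 0 < a) (he : 0 < e) :
    ∃ M, 0 ≤ M ∧ ∀ r z, a ≤ r → e ≤ 1 - r → |G r c z| ≤ M * (1 + |z|) := by
  refine ⟨(|c| + 1 / Real.sqrt a) / (2 * e ^ ((3:ℝ)/2)), by positivity, fun r z hr hr1 => ?_⟩
  have h1 : 0 < 1 - r := by linarith
  have h0 : 0 < r := by linarith
  have p := Real.sqrt_pos.2 ha
  unfold G
  rw [abs_div, abs_of_pos (show 0 < 2 * (1 - r) ^ ((3:ℝ)/2) by positivity), div_mul_eq_mul_div]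
  have hN : |c + z / Real.sqrt r| ≤ (|c| + 1 / Real.sqrt a) * (1 + |z|) := by
    calc |c + z / Real.sqrt r| ≤ |c| + |z / Real.sqrt r| := abs_add_le _ _
      _ = |c| + |z| / Real.sqrt r := by rw [abs_div, abs_of_nonneg (Real.sqrt_nonneg r)]
      _ ≤ |c| + |z| / Real.sqrt a := by gcongr
      _ ≤ |c| + |z| / Real.sqrt a + (|c| * |z| + 1 / Real.sqrt a) := by
          have : 0 ≤ |c| * |z| + 1 / Real.sqrt a := by positivity
          linarith
      _ = _ := by ring
  gcongr

lemma F1_bound (n : ℕ) (c : ℝ) {a e : ℝ} (ha : 0 < a) (he : 0 < e) :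
    ∃ C, ∀ r z, a ≤ r → e ≤ 1 - r → ‖F1 n c r z‖ ≤ C * (1 + z ^ 2) * phi z := by
  obtain ⟨M, hM, hG⟩ := G_bound c ha he
  refine ⟨n * (2 * M), fun r z hr hr1 => ?_⟩
  have hg := hG r z hr hr1
  have hz : 1 + |z| ≤ 2 * (1 + z ^ 2) := by nlinarith [sq_nonneg (|z| - 1), sq_abs z]
  have hg1 : |G r c z| ≤ 2 * M * (1 + z ^ 2) := by nlinarith
  have hP := Phi_nonneg (dd r c z)
  have hp := (phi_pos (dd r c z)).le
  have hpz := (phi_pos z).le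
  have hPn : Phi (dd r c z) ^ (n - 1) ≤ 1 := pow_le_one₀ hP (Phi_le_one _)
  have hPn0 : 0 ≤ Phi (dd r c z) ^ (n - 1) := by positivity
  unfold F1
  rw [Real.norm_eq_abs, abs_mul, abs_mul, abs_mul, abs_mul, abs_of_nonneg hPn0, abs_of_nonneg hp,
    abs_of_nonneg hpz, Nat.abs_cast]
  calc (n:ℝ) * Phi (dd r c z) ^ (n - 1) * phi (dd r c z) * |G r c z| * phi z
      ≤ n * 1 * 1 * (2 * M * (1 + z ^ 2)) * phi z := by
        gcongr
        exact phi_le_one _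
    _ = _ := by ring

lemma F2_bound (n : ℕ) (c : ℝ) {a e : ℝ} (ha : 0 < a) (he : 0 < e) :
    ∃ C, ∀ r z, a ≤ r → e ≤ 1 - r → ‖F2 n c r z‖ ≤ C * (1 + z ^ 2) * phi z := by
  obtain ⟨M, hM, hG⟩ := G_bound c ha he
  refine ⟨n * ((n + 1 + 1) * (2 * M ^ 2) + 2 * M * (5 / (2 * a * e)) +
    |c| / (4 * a * e ^ ((3:ℝ)/2))), fun r z hr hr1 => ?_⟩
  have h1 : 0 < 1 - r := by linarith
  have h0 : 0 < r := by linarith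
  have hg := hG r z hr hr1
  have hz : 1 + |z| ≤ 2 * (1 + z ^ 2) := by nlinarith [sq_nonneg (|z| - 1), sq_abs z]
  have hg1 : |G r c z| ≤ 2 * M * (1 + z ^ 2) := by nlinarith
  have hg2 : |G r c z| ^ 2 ≤ 2 * M ^ 2 * (1 + z ^ 2) := by
    calc |G r c z| ^ 2 ≤ (M * (1 + |z|)) ^ 2 := by gcongr
      _ = M ^ 2 * (1 + |z|) ^ 2 := by ring
      _ ≤ M ^ 2 * (2 * (1 + z ^ 2)) := by
        gcongr
        nlinarith [sq_nonneg (|z| - 1), sq_abs z]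
      _ = _ := by ring
  have hpd := abs_mul_phi_le_one (dd r c z)
  unfold F2
  generalize dd r c z = d at *
  generalize G r c z = g at *
  have hP := Phi_nonneg d
  have hP1 := Phi_le_one d
  have hp := (phi_pos d).le
  have hp1 := phi_le_one d
  have hpz := (phi_pos z).le
  have hPn : Phi d ^ (n - 2) ≤ 1 := pow_le_one₀ hP hP1
  have hPn0 : 0 ≤ Phi d ^ (n - 2) := by positivity
  have hr4 : |4 * r - 1| ≤ 5 := by rw [abs_le]; constructor <;> linarith
  have t1 : |phi d * (((n:ℝ) - 1) * phi d - d * Phi d)| ≤ n + 1 + 1 := by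
    calc |phi d * (((n:ℝ) - 1) * phi d - d * Phi d)|
        = |((n:ℝ) - 1) * (phi d * phi d) - d * phi d * Phi d| := by ring_nf
      _ ≤ |((n:ℝ) - 1) * (phi d * phi d)| + |d * phi d * Phi d| := abs_sub _ _
      _ = |(n:ℝ) - 1| * (phi d * phi d) + |d| * phi d * Phi d := by
        rw [abs_mul, abs_mul, abs_mul, abs_mul, abs_of_nonneg hp, abs_of_nonneg hP]
      _ ≤ (n + 1) * (1 * 1) + 1 * 1 := by
        gcongr
        rw [abs_le]; constructor <;> linarith [Nat.cast_nonneg (α := ℝ) n]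
      _ = _ := by ring
  have t2 : |phi d * (Phi d * g * (4 * r - 1) / (2 * r * (1 - r)))|
      ≤ 2 * M * (1 + z ^ 2) * (5 / (2 * a * e)) := by
    rw [abs_mul, abs_div, abs_mul, abs_mul, abs_of_nonneg hp, abs_of_nonneg hP,
      abs_of_pos (show 0 < 2 * r * (1 - r) by positivity)]
    calc phi d * (Phi d * |g| * |4 * r - 1| / (2 * r * (1 - r)))
        ≤ 1 * (1 * (2 * M * (1 + z ^ 2)) * 5 / (2 * a * e)) := by gcongr
      _ = _ := by ring
  have t3 : |phi d * (c * Phi d / (4 * r * (1 - r) ^ ((3:ℝ)/2)))|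
      ≤ |c| / (4 * a * e ^ ((3:ℝ)/2)) * (1 + z ^ 2) := by
    rw [abs_mul, abs_div, abs_mul, abs_of_nonneg hp, abs_of_nonneg hP,
      abs_of_pos (show 0 < 4 * r * (1 - r) ^ ((3:ℝ)/2) by positivity)]
    calc phi d * (|c| * Phi d / (4 * r * (1 - r) ^ ((3:ℝ)/2)))
        ≤ 1 * (|c| * 1 / (4 * a * e ^ ((3:ℝ)/2))) := by gcongr
      _ = |c| / (4 * a * e ^ ((3:ℝ)/2)) * 1 := by ring
      _ ≤ _ := by gcongr; nlinarith [sq_nonneg z]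
  generalize Phi d * g * (4 * r - 1) / (2 * r * (1 - r)) = A at *
  generalize c * Phi d / (4 * r * (1 - r) ^ ((3:ℝ)/2)) = B at *
  generalize ((n:ℝ) - 1) * phi d - d * Phi d = D at *
  have t4 : |phi d * (D * g ^ 2 + A + B)| ≤ (n + 1 + 1) * (2 * M ^ 2 * (1 + z ^ 2)) +
      2 * M * (1 + z ^ 2) * (5 / (2 * a * e)) + |c| / (4 * a * e ^ ((3:ℝ)/2)) * (1 + z ^ 2) := by
    calc |phi d * (D * g ^ 2 + A + B)| = |phi d * D * g ^ 2 + phi d * A + phi d * B| := by ring_nf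
      _ ≤ |phi d * D * g ^ 2| + |phi d * A| + |phi d * B| := abs_add_three _ _ _
      _ = |phi d * D| * |g| ^ 2 + |phi d * A| + |phi d * B| := by
        rw [abs_mul (phi d * D), abs_pow]
      _ ≤ _ := by gcongr
  rw [Real.norm_eq_abs]
  calc |(n:ℝ) * Phi d ^ (n - 2) * phi d * (D * g ^ 2 + A + B) * phi z|
      = n * Phi d ^ (n - 2) * |phi d * (D * g ^ 2 + A + B)| * phi z := by
        rw [mul_assoc ((n:ℝ) * Phi d ^ (n - 2)), abs_mul, abs_mul, abs_mul, Nat.abs_cast,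
          abs_of_nonneg hPn0, abs_of_nonneg hpz]
    _ ≤ n * 1 * ((n + 1 + 1) * (2 * M ^ 2 * (1 + z ^ 2)) +
      2 * M * (1 + z ^ 2) * (5 / (2 * a * e)) + |c| / (4 * a * e ^ ((3:ℝ)/2)) * (1 + z ^ 2))
        * phi z := by gcongr
    _ = _ := by ring

lemma nhd {ρ : ℝ} (hρ : ρ ∈ Set.Ioo (0:ℝ) 1) :
    Set.Ioo (ρ / 2) ((1 + ρ) / 2) ∈ nhds ρ :=
  Ioo_mem_nhds (by linarith [hρ.1]) (by linarith [hρ.2])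

lemma integrable_F0 (n : ℕ) (c r : ℝ) : Integrable (fun z => Phi (dd r c z) ^ n * phi z) := by
  refine integrable_phi.mono (cont_F0 n c r).aestronglyMeasurable
    (Eventually.of_forall fun z => ?_)
  have hP := Phi_nonneg (dd r c z)
  rw [norm_mul, Real.norm_eq_abs, abs_of_nonneg (by positivity : 0 ≤ Phi (dd r c z) ^ n)]
  exact mul_le_of_le_one_left (norm_nonneg _) (pow_le_one₀ hP (Phi_le_one _))

lemma hasDerivAt_Hn (n : ℕ) (c : ℝ) {ρ : ℝ} (hρ : ρ ∈ Set.Ioo (0:ℝ) 1) :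
    HasDerivAt (fun r => Hn n r c) (∫ z, F1 n c ρ z) ρ := by
  have ha : 0 < ρ / 2 := by linarith [hρ.1]
  have he : 0 < (1 - ρ) / 2 := by linarith [hρ.2]
  obtain ⟨C, hC⟩ := F1_bound n c ha he
  exact (hasDerivAt_integral_of_dominated_loc_of_deriv_le (μ := volume)
    (F := fun r z => Phi (dd r c z) ^ n * phi z) (F' := fun r z => F1 n c r z)
    (bound := fun z => C * (1 + z ^ 2) * phi z) (nhd hρ)
    (Eventually.of_forall fun r => (cont_F0 n c r).aestronglyMeasurable)
    (integrable_F0 n c ρ) (cont_F1 n c ρ).aestronglyMeasurable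
    (Eventually.of_forall fun z r hr => hC r z hr.1.le (by linarith [hr.2]))
    (integrable_bound C)
    (Eventually.of_forall fun z r hr => hasDerivAt_F0 n c z (by linarith [hr.1])
      (by linarith [hr.2]))).2

theorem hasDerivAt_deriv_Hn (n : ℕ) (hn : 2 ≤ n) (c : ℝ) (ρ : ℝ) (hρ : ρ ∈ Set.Ioo (0:ℝ) 1) :
    HasDerivAt (deriv (fun r => Hn n r c))
      (∫ z : ℝ, (n : ℝ) * (Phi (dd ρ c z)) ^ (n - 2) * phi (dd ρ c z) *
        ((((n : ℝ) - 1) * phi (dd ρ c z) - dd ρ c z * Phi (dd ρ c z)) * (G ρ c z) ^ 2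
          + Phi (dd ρ c z) * G ρ c z * (4 * ρ - 1) / (2 * ρ * (1 - ρ))
          + c * Phi (dd ρ c z) / (4 * ρ * (1 - ρ) ^ ((3 : ℝ) / 2))) * phi z) ρ := by
  have ha : 0 < ρ / 2 := by linarith [hρ.1]
  have he : 0 < (1 - ρ) / 2 := by linarith [hρ.2]
  obtain ⟨C1, hC1⟩ := F1_bound n c ha he
  obtain ⟨C, hC⟩ := F2_bound n c ha he
  have hint : Integrable (F1 n c ρ) :=
    (integrable_bound C1).mono' (cont_F1 n c ρ).aestronglyMeasurable
      (Eventually.of_forall fun z => hC1 ρ z (by linarith) (by linarith))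
  have key := (hasDerivAt_integral_of_dominated_loc_of_deriv_le (μ := volume)
    (F := fun r z => F1 n c r z) (F' := fun r z => F2 n c r z)
    (bound := fun z => C * (1 + z ^ 2) * phi z) (nhd hρ)
    (Eventually.of_forall fun r => (cont_F1 n c r).aestronglyMeasurable)
    hint (cont_F2 n c ρ).aestronglyMeasurable
    (Eventually.of_forall fun z r hr => hC r z hr.1.le (by linarith [hr.2]))
    (integrable_bound C)
    (Eventually.of_forall fun z r hr => hasDerivAt_F1 n hn c z (by linarith [hr.1])
      (by linarith [hr.2]))).2
  refine key.congr_of_eventuallyEq ?_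
  filter_upwards [Ioo_mem_nhds hρ.1 hρ.2] with r hr
  exact (hasDerivAt_Hn n c hr).deriv
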